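/- Let 0 < μ < 1/2 and let v : [0,1]² → ℂ be given by the Fourier cosine series v(x) = Σ_{m,n≥0} c_{mn} cos(πn x₁) cos(πm x₂) with Σ_{m,n} |c_{mn}|² (1 + m² + n²) < ∞. Then there is a constant C independent of μ and v such that ∫_{|x₁ − 1/2| < μ} |v(x₁, 0)|² dx₁ ≤ C μ |ln μ| · Σ_{m,n} |c_{mn}|² (1 + m² + n²). -/

import Mathlib

open MeasureTheory

lemma aux_cos_int (k : ℤ) : (∫ x in (0:ℝ)..1, Real.cos (Real.pi * k * x)) = if k = 0 then 1 else 0 := by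
  split_ifs with h
  · simp [h]
  · have hk : (Real.pi * k : ℝ) ≠ 0 := mul_ne_zero Real.pi_ne_zero (by exact_mod_cast h)
    rw [intervalIntegral.integral_comp_mul_left (fun y => Real.cos y) hk]
    have : Real.sin (Real.pi * k) = 0 := by rw [mul_comm]; exact Real.sin_int_mul_pi k
    simp [this]

lemma aux_cos_cos (n m : ℕ) : (∫ x in (0:ℝ)..1, Real.cos (Real.pi * n * x) * Real.cos (Real.pi * m * x))
    = ((if (n:ℤ) - m = 0 then 1 else 0) + (if (n:ℤ) + m = 0 then 1 else 0)) / 2 := by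
  have h : ∀ x : ℝ, Real.cos (Real.pi * n * x) * Real.cos (Real.pi * m * x)
      = (Real.cos (Real.pi * ((n:ℤ) - m : ℤ) * x) + Real.cos (Real.pi * ((n:ℤ) + m : ℤ) * x)) / 2 := by
    intro x
    have e1 : Real.pi * (((n:ℤ) - m : ℤ):ℝ) * x = Real.pi * n * x - Real.pi * m * x := by
      push_cast; ring
    have e2 : Real.pi * (((n:ℤ) + m : ℤ):ℝ) * x = Real.pi * n * x + Real.pi * m * x := by
      push_cast; ring
    rw [e1, e2, Real.cos_sub, Real.cos_add]; ring
  simp_rw [h]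
  rw [intervalIntegral.integral_div, intervalIntegral.integral_add, aux_cos_int, aux_cos_int]
  · exact (by fun_prop : Continuous _).intervalIntegrable _ _
  · exact (by fun_prop : Continuous _).intervalIntegrable _ _

lemma aux_bessel_real (s : Finset ℕ) (a : ℕ → ℝ) :
    (∫ x in (0:ℝ)..1, (∑ n ∈ s, a n * Real.cos (Real.pi * n * x)) ^ 2) ≤ ∑ n ∈ s, a n ^ 2 := by
  have h : ∀ x : ℝ, (∑ n ∈ s, a n * Real.cos (Real.pi * n * x)) ^ 2 =
      ∑ n ∈ s, ∑ m ∈ s, a n * a m * (Real.cos (Real.pi * n * x) * Real.cos (Real.pi * m * x)) := by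
    intro x
    rw [sq, Finset.sum_mul_sum]
    exact Finset.sum_congr rfl fun n _ => Finset.sum_congr rfl fun m _ => by ring
  simp_rw [h]
  rw [intervalIntegral.integral_finsetSum]
  swap
  · intro n _
    exact (by fun_prop : Continuous _).intervalIntegrable _ _
  apply Finset.sum_le_sum
  intro n hn
  rw [intervalIntegral.integral_finsetSum]
  swap
  · intro m _
    exact (by fun_prop : Continuous _).intervalIntegrable _ _
  simp_rw [intervalIntegral.integral_const_mul, aux_cos_cos]
  rw [Finset.sum_eq_single n]
  · have : ((if (n:ℤ) - n = 0 then (1:ℝ) else 0) + (if (n:ℤ) + n = 0 then 1 else 0)) / 2 ≤ 1 := by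
      split_ifs <;> norm_num
    nlinarith [mul_le_mul_of_nonneg_left this (mul_self_nonneg (a n))]
  · intro m _ hm
    rw [if_neg (by omega), if_neg (by omega)]; simp
  · intro h; exact absurd hn h

lemma aux_bessel (s : Finset ℕ) (a : ℕ → ℂ) :
    (∫ x in (0:ℝ)..1, ‖∑ n ∈ s, a n * (Real.cos (Real.pi * n * x) : ℂ)‖ ^ 2)
      ≤ ∑ n ∈ s, ‖a n‖ ^ 2 := by
  have h : ∀ x : ℝ, ‖∑ n ∈ s, a n * (Real.cos (Real.pi * n * x) : ℂ)‖ ^ 2 =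
      (∑ n ∈ s, (a n).re * Real.cos (Real.pi * n * x)) ^ 2 +
      (∑ n ∈ s, (a n).im * Real.cos (Real.pi * n * x)) ^ 2 := by
    intro x
    rw [Complex.sq_norm, Complex.normSq_apply, Complex.re_sum, Complex.im_sum]
    simp_rw [Complex.re_mul_ofReal, Complex.im_mul_ofReal]
    ring
  simp_rw [h]
  rw [intervalIntegral.integral_add]
  · refine (add_le_add (aux_bessel_real s _) (aux_bessel_real s _)).trans (le_of_eq ?_)
    rw [← Finset.sum_add_distrib]
    refine Finset.sum_congr rfl fun n _ => ?_
    rw [Complex.sq_norm, Complex.normSq_apply]; ring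
  · exact (by fun_prop : Continuous _).intervalIntegrable _ _
  · exact (by fun_prop : Continuous _).intervalIntegrable _ _

lemma aux_trace (μ : ℝ) (h0 : 0 < μ) (h1 : μ < 1 / 2) (a : ℕ → ℂ) (N : ℕ) :
    (∫ x in Set.Ioo (1 / 2 - μ) (1 / 2 + μ),
      ‖∑ n ∈ Finset.range N, a n * (Real.cos (Real.pi * n * x) : ℂ)‖ ^ 2) ≤
    20 * μ * |Real.log μ| * ∑ n ∈ Finset.range N, ‖a n‖ ^ 2 * (1 + n) := by
  set E := ∑ n ∈ Finset.range N, ‖a n‖ ^ 2 * (1 + (n:ℝ)) with hE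
  have hE0 : 0 ≤ E := Finset.sum_nonneg fun n _ => by positivity
  set L := |Real.log μ| with hL
  have hLe : L = - Real.log μ := abs_of_neg (Real.log_neg h0 (by linarith))
  have hlog2 := Real.log_two_gt_d9
  have hL2 : Real.log 2 ≤ L := by
    rw [hLe, ← Real.log_inv]
    apply Real.log_le_log (by norm_num)
    rw [le_inv_comm₀ (by norm_num) h0]; linarith
  set M := ⌈1 / μ⌉₊ with hM
  have hM1 : 1 / μ ≤ M := Nat.le_ceil _
  have hM2 : (M:ℝ) < 1 / μ + 1 := Nat.ceil_lt_add_one (by positivity)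
  have hinv : 1 ≤ 1 / μ := by rw [le_div_iff₀ h0]; linarith
  have hMpos : (0:ℝ) < M := by linarith
  have hlogM : Real.log M ≤ 2 * L := by
    have : Real.log M ≤ Real.log (2 / μ) := by
      apply Real.log_le_log hMpos
      have : 2 / μ = 1 / μ + 1 / μ := by ring
      linarith
    rw [Real.log_div (by norm_num) h0.ne'] at this
    linarith
  have hharm : ∑ n ∈ Finset.range M, 1 / (1 + (n:ℝ)) ≤ 4 * L := by
    have := harmonic_le_one_add_log M
    have e : ((harmonic M : ℚ) : ℝ) = ∑ n ∈ Finset.range M, 1 / (1 + (n:ℝ)) := by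
      simp [harmonic, add_comm]
    rw [e] at this
    linarith
  set lo := (Finset.range N).filter (fun n => n < M) with hlo
  set hi := (Finset.range N).filter (fun n => ¬ n < M) with hhi
  have hcslow : (∑ n ∈ lo, ‖a n‖) ^ 2 ≤ E * (4 * L) := by
    have h1 := Finset.sum_sq_le_sum_mul_sum_of_sq_eq_mul lo (r := fun n => ‖a n‖)
      (f := fun n => ‖a n‖ ^ 2 * (1 + (n:ℝ))) (g := fun n => 1 / (1 + (n:ℝ)))
      (fun n _ => by positivity) (fun n _ => by positivity)
      (fun n _ => by field_simp)
    refine h1.trans (mul_le_mul ?_ ?_ (Finset.sum_nonneg fun n _ => by positivity) hE0)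
    · exact Finset.sum_le_sum_of_subset_of_nonneg (Finset.filter_subset _ _)
        fun n _ _ => by positivity
    · refine le_trans (Finset.sum_le_sum_of_subset_of_nonneg (t := Finset.range M) ?_
        fun n _ _ => by positivity) hharm
      intro n hn
      simp [hlo] at hn ⊢; exact hn.2
  have hhigh : ∑ n ∈ hi, ‖a n‖ ^ 2 ≤ μ * E := by
    rw [hE, Finset.mul_sum]
    refine le_trans (Finset.sum_le_sum (g := fun n => μ * (‖a n‖ ^ 2 * (1 + (n:ℝ)))) ?_)
      (Finset.sum_le_sum_of_subset_of_nonneg (Finset.filter_subset _ _)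
        fun n _ _ => by positivity)
    intro n hn
    simp [hhi] at hn
    have hnM : (M:ℝ) ≤ n := by exact_mod_cast hn.2
    have : 1 ≤ μ * (1 + n) := by
      have : 1 / μ ≤ 1 + n := by linarith
      rw [div_le_iff₀ h0] at this; linarith
    nlinarith [mul_le_mul_of_nonneg_left this (sq_nonneg ‖a n‖)]
  have hpt : ∀ x : ℝ, ‖∑ n ∈ Finset.range N, a n * (Real.cos (Real.pi * n * x) : ℂ)‖ ^ 2 ≤
      2 * (E * (4 * L)) + 2 * ‖∑ n ∈ hi, a n * (Real.cos (Real.pi * n * x) : ℂ)‖ ^ 2 := by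
    intro x
    rw [← Finset.sum_filter_add_sum_filter_not (Finset.range N) (fun n => n < M)]
    have hl : ‖∑ n ∈ lo, a n * (Real.cos (Real.pi * n * x) : ℂ)‖ ≤ ∑ n ∈ lo, ‖a n‖ := by
      refine (norm_sum_le _ _).trans (Finset.sum_le_sum fun n _ => ?_)
      rw [norm_mul, Complex.norm_real, Real.norm_eq_abs]
      exact mul_le_of_le_one_right (norm_nonneg _) (Real.abs_cos_le_one _)
    have hl2 := (pow_le_pow_left₀ (norm_nonneg _) hl 2).trans hcslow
    have htri := norm_add_le (∑ n ∈ lo, a n * (Real.cos (Real.pi * n * x) : ℂ))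
      (∑ n ∈ hi, a n * (Real.cos (Real.pi * n * x) : ℂ))
    have htri2 := pow_le_pow_left₀ (norm_nonneg _) htri 2
    refine htri2.trans ?_
    nlinarith [sq_nonneg (‖∑ n ∈ lo, a n * (Real.cos (Real.pi * n * x) : ℂ)‖ -
      ‖∑ n ∈ hi, a n * (Real.cos (Real.pi * n * x) : ℂ)‖)]
  have hcont : ∀ s : Finset ℕ, Continuous
      (fun x : ℝ => ‖∑ n ∈ s, a n * (Real.cos (Real.pi * n * x) : ℂ)‖ ^ 2) := by
    intro s; fun_prop
  have hint : ∀ f : ℝ → ℝ, Continuous f →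
      IntegrableOn f (Set.Ioo (1 / 2 - μ) (1 / 2 + μ)) := fun f hf =>
    (hf.integrableOn_Icc (a := 1/2 - μ) (b := 1/2+μ)).mono_set Set.Ioo_subset_Icc_self
  have hhint : (∫ x in Set.Ioo (1 / 2 - μ) (1 / 2 + μ),
      ‖∑ n ∈ hi, a n * (Real.cos (Real.pi * n * x) : ℂ)‖ ^ 2) ≤ μ * E := by
    refine le_trans ?_ ((aux_bessel hi a).trans hhigh)
    rw [intervalIntegral.integral_of_le zero_le_one]
    apply setIntegral_mono_set
    · exact ((hcont hi).integrableOn_Icc (a := 0) (b := 1)).mono_set Set.Ioc_subset_Icc_self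
    · exact Filter.Eventually.of_forall fun x => by positivity
    · apply HasSubset.Subset.eventuallyLE
      intro x hx
      constructor <;> linarith [hx.1, hx.2]
  calc _ ≤ ∫ x in Set.Ioo (1 / 2 - μ) (1 / 2 + μ), (2 * (E * (4 * L)) +
        2 * ‖∑ n ∈ hi, a n * (Real.cos (Real.pi * n * x) : ℂ)‖ ^ 2) := by
        apply setIntegral_mono (hint _ (hcont _)) (hint _ _) hpt
        exact continuous_const.add (continuous_const.mul (hcont hi))
    _ = 2 * μ * (2 * (E * (4 * L))) + 2 * ∫ x in Set.Ioo (1 / 2 - μ) (1 / 2 + μ),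
        ‖∑ n ∈ hi, a n * (Real.cos (Real.pi * n * x) : ℂ)‖ ^ 2 := by
        rw [integral_add (hint _ continuous_const)
          (hint (fun x => 2 * ‖∑ n ∈ hi, a n * (Real.cos (Real.pi * n * x) : ℂ)‖ ^ 2)
            (continuous_const.mul (hcont hi))), setIntegral_const]
        congr 1
        swap
        · exact integral_const_mul _ _
        simp only [smul_eq_mul, Measure.real, Real.volume_Ioo]
        rw [ENNReal.toReal_ofReal (by linarith)]; ring
    _ ≤ 20 * μ * L * E := by
        have : μ * E ≤ μ * E * (2 * L) := le_mul_of_one_le_right (by positivity) (by linarith)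
        nlinarith

lemma aux_tail (n J : ℕ) : ∑ m ∈ Finset.range J, 1 / (1 + (m:ℝ) ^ 2 + (n:ℝ) ^ 2) ≤ 6 / (1 + (n:ℝ)) := by
  have h : ∑ m ∈ Finset.range J, 1 / (1 + (m:ℝ) ^ 2 + (n:ℝ) ^ 2)
      ≤ 6 / (1 + (n:ℝ)) - 6 / (1 + (n:ℝ) + (J:ℝ)) := by
    induction J with
    | zero => simp
    | succ J ih =>
      rw [Finset.sum_range_succ]
      have : 1 / (1 + (J:ℝ) ^ 2 + (n:ℝ) ^ 2) ≤ 6 / (1 + (n:ℝ) + (J:ℝ)) - 6 / (1 + (n:ℝ) + ((J + 1 : ℕ) : ℝ)) := by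
        have hJ : (0:ℝ) ≤ J := by positivity
        have hn : (0:ℝ) ≤ n := by positivity
        push_cast
        rw [div_sub_div _ _ (by positivity) (by positivity), div_le_div_iff₀ (by positivity) (by positivity)]
        nlinarith [sq_nonneg ((J:ℝ) - n), sq_nonneg ((J:ℝ) - 1), sq_nonneg ((n:ℝ) - 1)]
      linarith
  have : (0:ℝ) ≤ 6 / (1 + (n:ℝ) + (J:ℝ)) := by positivity
  linarith

lemma aux_row (n : ℕ) (d : ℕ → ℂ)
    (hd : Summable fun m : ℕ => ‖d m‖ ^ 2 * (1 + (m:ℝ) ^ 2 + (n:ℝ) ^ 2)) :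
    ‖∑' m, d m‖ ^ 2 * (1 + n) ≤ 6 * ∑' m : ℕ, ‖d m‖ ^ 2 * (1 + (m:ℝ) ^ 2 + (n:ℝ) ^ 2) := by
  set A := ∑' m : ℕ, ‖d m‖ ^ 2 * (1 + (m:ℝ) ^ 2 + (n:ℝ) ^ 2) with hA
  have hA0 : 0 ≤ A := tsum_nonneg fun m => by positivity
  have hJ : ∀ J, ∑ m ∈ Finset.range J, ‖d m‖ ≤ Real.sqrt (A * (6 / (1 + n))) := by
    intro J
    apply Real.le_sqrt_of_sq_le
    have h1 := Finset.sum_sq_le_sum_mul_sum_of_sq_eq_mul (Finset.range J) (r := fun m => ‖d m‖)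
      (f := fun m : ℕ => ‖d m‖ ^ 2 * (1 + (m:ℝ) ^ 2 + (n:ℝ) ^ 2))
      (g := fun m : ℕ => 1 / (1 + (m:ℝ) ^ 2 + (n:ℝ) ^ 2))
      (fun n _ => by positivity) (fun n _ => by positivity)
      (fun n _ => by field_simp)
    refine h1.trans (mul_le_mul ?_ (aux_tail n J) (Finset.sum_nonneg fun n _ => by positivity) hA0)
    exact hd.sum_le_tsum _ (fun m _ => by positivity)
  have hs : Summable fun m => ‖d m‖ :=
    summable_of_sum_range_le (fun m => norm_nonneg _) hJ
  have h2 : ‖∑' m, d m‖ ≤ Real.sqrt (A * (6 / (1 + n))) :=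
    (norm_tsum_le_tsum_norm hs).trans (Real.tsum_le_of_sum_range_le (fun m => norm_nonneg _) hJ)
  have h3 := pow_le_pow_left₀ (norm_nonneg _) h2 2
  rw [Real.sq_sqrt (by positivity)] at h3
  have h4 := mul_le_mul_of_nonneg_right h3 (by positivity : (0:ℝ) ≤ 1 + n)
  refine h4.trans (le_of_eq ?_)
  field_simp

/-- Fourier-series form of the trace estimate (Lemma 5.2): for `0 < μ < 1/2` and
`v(x) = Σ c_{mn} cos(πn x₁) cos(πm x₂)` with `Σ |c_{mn}|²(1+m²+n²) < ∞`, the trace of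
`v` on the boundary window `|x₁ − 1/2| < μ`, `x₂ = 0` satisfies
`∫ |v(x₁,0)|² dx₁ ≤ C μ |ln μ| Σ |c_{mn}|²(1+m²+n²)`. -/
theorem fourier_trace_estimate :
    ∃ C > (0 : ℝ), ∀ μ : ℝ, 0 < μ → μ < 1 / 2 → ∀ c : ℕ → ℕ → ℂ,
      Summable (fun p : ℕ × ℕ =>
        ‖c p.1 p.2‖ ^ 2 * (1 + (p.1 : ℝ) ^ 2 + (p.2 : ℝ) ^ 2)) →
      (∫ x in Set.Ioo (1 / 2 - μ) (1 / 2 + μ),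
          ‖∑' p : ℕ × ℕ, c p.1 p.2 * (Real.cos (Real.pi * p.2 * x) : ℂ)‖ ^ 2) ≤
        C * μ * |Real.log μ| *
          ∑' p : ℕ × ℕ, ‖c p.1 p.2‖ ^ 2 * (1 + (p.1 : ℝ) ^ 2 + (p.2 : ℝ) ^ 2) := by
  refine ⟨120, by norm_num, ?_⟩
  intro μ h0 h1 c hc
  set T := ∑' p : ℕ × ℕ, ‖c p.1 p.2‖ ^ 2 * (1 + (p.1 : ℝ) ^ 2 + (p.2 : ℝ) ^ 2) with hT
  have hT0 : 0 ≤ T := tsum_nonneg fun p => by positivity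
  set a : ℕ → ℂ := fun n => ∑' m, c m n with ha
  have hc' := hc.prod_symm
  have hrow : ∀ n : ℕ, Summable fun m : ℕ => ‖c m n‖ ^ 2 * (1 + (m:ℝ) ^ 2 + (n:ℝ) ^ 2) :=
    fun n => hc'.prod_factor n
  have hTsum : HasSum (fun n : ℕ => ∑' m : ℕ, ‖c m n‖ ^ 2 * (1 + (m:ℝ) ^ 2 + (n:ℝ) ^ 2)) T := by
    have h2 := ((Equiv.prodComm ℕ ℕ).hasSum_iff.mpr hc.hasSum).prod_fiberwise
      (fun n => (hrow n).hasSum)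
    exact h2
  have hE : ∀ N, ∑ n ∈ Finset.range N, ‖a n‖ ^ 2 * (1 + (n:ℝ)) ≤ 6 * T := by
    intro N
    refine (Finset.sum_le_sum fun n _ => aux_row n (fun m => c m n) (hrow n)).trans ?_
    rw [← Finset.mul_sum]
    refine mul_le_mul_of_nonneg_left ?_ (by norm_num)
    exact sum_le_hasSum _ (fun n _ => tsum_nonneg fun m => by positivity) hTsum
  set S : ℕ → ℝ → ℝ := fun N x =>
    ‖∑ n ∈ Finset.range N, a n * (Real.cos (Real.pi * n * x) : ℂ)‖ ^ 2 with hS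
  have hScont : ∀ N, Continuous (S N) := by intro N; simp only [hS]; fun_prop
  set B := 120 * μ * |Real.log μ| * T with hB
  have hB0 : 0 ≤ B := by positivity
  have hSB : ∀ N, ∫ x in Set.Ioo (1 / 2 - μ) (1 / 2 + μ), S N x ≤ B := by
    intro N
    refine (aux_trace μ h0 h1 a N).trans ?_
    refine (mul_le_mul_of_nonneg_left (hE N) (by positivity)).trans (le_of_eq ?_)
    rw [hB]; ring
  have hSl : ∀ N, ∫⁻ x in Set.Ioo (1 / 2 - μ) (1 / 2 + μ), ENNReal.ofReal (S N x)
      ≤ ENNReal.ofReal B := by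
    intro N
    rw [← ofReal_integral_eq_lintegral_ofReal]
    · exact ENNReal.ofReal_le_ofReal (hSB N)
    · exact ((hScont N).integrableOn_Icc (a := 1/2 - μ) (b := 1/2+μ)).mono_set
        Set.Ioo_subset_Icc_self
    · exact Filter.Eventually.of_forall fun x => by simp only [hS]; positivity
  set f : ℝ → ℝ := fun x =>
    ‖∑' p : ℕ × ℕ, c p.1 p.2 * (Real.cos (Real.pi * p.2 * x) : ℂ)‖ ^ 2 with hf
  have hpt : ∀ x, ENNReal.ofReal (f x) ≤
      Filter.liminf (fun N => ENNReal.ofReal (S N x)) Filter.atTop := by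
    intro x
    by_cases hs : Summable fun p : ℕ × ℕ => c p.1 p.2 * (Real.cos (Real.pi * p.2 * x) : ℂ)
    · have h2 := ((Equiv.prodComm ℕ ℕ).hasSum_iff.mpr hs.hasSum).prod_fiberwise
        (fun n => (hs.prod_symm.prod_factor n).hasSum)
      have h3 : HasSum (fun n : ℕ => a n * (Real.cos (Real.pi * n * x) : ℂ))
          (∑' p : ℕ × ℕ, c p.1 p.2 * (Real.cos (Real.pi * p.2 * x) : ℂ)) := by
        convert h2 using 2 with n
        simp only [ha]
        rw [← tsum_mul_right]
        rfl
      have h4 := h3.tendsto_sum_nat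
      have h5 : Filter.Tendsto (fun N => ENNReal.ofReal (S N x)) Filter.atTop
          (nhds (ENNReal.ofReal (f x))) :=
        ENNReal.tendsto_ofReal ((h4.norm).pow 2)
      exact h5.liminf_eq.ge
    · simp only [hf]
      rw [tsum_eq_zero_of_not_summable hs]
      simp
  have hfl : ∫⁻ x in Set.Ioo (1 / 2 - μ) (1 / 2 + μ), ENNReal.ofReal (f x) ≤ ENNReal.ofReal B := by
    refine (lintegral_mono hpt).trans ?_
    refine (lintegral_liminf_le fun N => (hScont N).measurable.ennreal_ofReal).trans ?_
    refine (Filter.liminf_le_liminf (Filter.Eventually.of_forall hSl)).trans ?_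
    simp
  change ∫ x in Set.Ioo (1 / 2 - μ) (1 / 2 + μ), f x ≤ B
  by_cases hfi : Integrable f (volume.restrict (Set.Ioo (1 / 2 - μ) (1 / 2 + μ)))
  · have hf0 : 0 ≤ᵐ[volume.restrict (Set.Ioo (1 / 2 - μ) (1 / 2 + μ))] f :=
      Filter.Eventually.of_forall fun x => by simp only [hf]; positivity
    rw [← ofReal_integral_eq_lintegral_ofReal hfi hf0] at hfl
    exact (ENNReal.ofReal_le_ofReal_iff hB0).mp hfl
  · rw [integral_undef hfi]; exact hB0
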